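/- Let F be a free group of finite rank n ≥ 2 and let h₁, …, h_k be finitely many nontrivial elements of F. Then there exists a subgroup J of F such that: (i) J is free of rank 2, i.e. there is an injective group homomorphism from the free group on two generators onto J; (ii) J is malnormal in F; and (iii) for every i ∈ {1, …, k} and every g ∈ F, the intersection g J g⁻¹ ∩ ⟨h_i⟩ is trivial, where ⟨h_i⟩ is the cyclic subgroup generated by h_i. -/

import Mathlib

/-- The conjugate subgroup `g H g⁻¹`. -/
def conjSubgroup {G : Type*} [Group G] (g : G) (H : Subgroup G) : Subgroup G :=
  H.map (MulAut.conj g).toMonoidHom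

/-- A subgroup `H` of `G` is malnormal if `g H g⁻¹ ∩ H ≠ {1}` implies `g ∈ H`. -/
def IsMalnormal {G : Type*} [Group G] (H : Subgroup G) : Prop :=
  ∀ g : G, conjSubgroup g H ⊓ H ≠ ⊥ → g ∈ H

namespace SepCyc

open FreeGroup List

/-- Free cancellation of two reduced words. -/
theorem cancel_decomp {α : Type*} (B : List (α × Bool)) :
    ∀ A : List (α × Bool), FreeGroup.IsReduced A → FreeGroup.IsReduced B →
    ∃ A1 X B1, A = A1 ++ X ∧ B = invRev X ++ B1 ∧ FreeGroup.IsReduced (A1 ++ B1) := by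
  induction B with
  | nil => intro A hA _; exact ⟨A, [], [], by simp, by simp, by simpa using hA⟩
  | cons b B ih =>
    intro A hA hB
    rcases List.eq_nil_or_concat A with rfl | ⟨A', x, rfl⟩
    · exact ⟨[], [], b :: B, by simp, by simp, by simpa using hB⟩
    · by_cases hx : x.1 = b.1 → x.2 = b.2
      · refine ⟨A' ++ [x], [], b :: B, by simp, by simp, ?_⟩
        rw [FreeGroup.IsReduced, List.isChain_append]
        refine ⟨by rw [List.concat_eq_append] at hA; exact hA, hB, ?_⟩
        simpa using hx
      · push Not at hx
        obtain ⟨A1, X, B1, h1, h2, h3⟩ := ih A'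
          (by rw [List.concat_eq_append] at hA; exact (List.isChain_append.1 hA).1)
          (List.isChain_cons.1 hB).2
        refine ⟨A1, X ++ [x], B1, by simp [h1], ?_, h3⟩
        have : b = (x.1, !x.2) := by
          ext
          · exact hx.1.symm
          · have := hx.2
            revert this
            cases x.2 <;> cases b.2 <;> simp
        rw [h2, this]
        simp [invRev]

theorem isReduced_invRev {α : Type*} {w : List (α × Bool)} (h : FreeGroup.IsReduced w) :
    FreeGroup.IsReduced (invRev w) := by
  rw [invRev, FreeGroup.IsReduced, List.isChain_reverse, List.isChain_map]
  refine List.IsChain.imp ?_ h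
  intro a b hab h1
  simp at h1 ⊢
  exact (hab h1.symm).symm

theorem isCyc_invRev {α : Type*} {w : List (α × Bool)} (h : IsCyclicallyReduced w) :
    IsCyclicallyReduced (invRev w) := by
  refine ⟨isReduced_invRev h.1, ?_⟩
  have h2 := h.2
  intro a ha b hb hab
  simp only [invRev, List.getLast?_reverse, List.head?_reverse, List.head?_map,
    List.getLast?_map, Option.mem_def, Option.map_eq_some_iff] at ha hb
  obtain ⟨a', ha', rfl⟩ := ha
  obtain ⟨b', hb', rfl⟩ := hb
  simp at hab ⊢
  exact (h2 b' hb' a' ha' hab.symm).symm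

theorem mk_flatten_replicate {α : Type*} (w : List (α × Bool)) (m : ℕ) :
    mk (List.replicate m w).flatten = mk w ^ m := by
  induction m with
  | zero => simp; rfl
  | succ m ih => rw [List.replicate_succ, List.flatten_cons, ← mul_mk, ih, pow_succ']

theorem eq_of_mk_eq {α : Type*} {v w : List (α × Bool)} (hv : FreeGroup.IsReduced v) (hw : FreeGroup.IsReduced w)
    (h : mk v = mk w) : v = w := by
  classical
  have := congrArg toWord h
  rwa [toWord_mk, toWord_mk, hv.reduce_eq, hw.reduce_eq] at this

theorem prefix_of_conj {α : Type*} {p r g : List (α × Bool)} (hp : IsCyclicallyReduced p)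
    (hp0 : p ≠ []) (hr : IsCyclicallyReduced r) (j : ℕ) (hg : FreeGroup.IsReduced g)
    (hgp : FreeGroup.IsReduced (g ++ p)) (he : mk g * mk p = mk r ^ j * mk g) :
    ∃ K : ℕ, g ++ p <+: (List.replicate K r).flatten := by
  set m := g.length + p.length with hm
  have hpl : 0 < p.length := List.length_pos_iff.2 hp0
  have hm0 : m ≠ 0 := by omega
  have hred : FreeGroup.IsReduced (g ++ (List.replicate m p).flatten) := by
    have := IsReduced.append_flatten_replicate_append (L₁ := g) (L₃ := []) hp
      (by simpa using hgp) hm0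
    simpa using this
  have hpow : ∀ m : ℕ, mk g * mk p ^ m = mk r ^ (j * m) * mk g := by
    intro m
    induction m with
    | zero => simp
    | succ m ih =>
      rw [pow_succ, ← mul_assoc, ih, mul_assoc, he, ← mul_assoc, ← pow_add]
      rfl
  obtain ⟨A1, X, B1, h1, h2, h3⟩ := cancel_decomp g (List.replicate (j * m) r).flatten
    (hr.flatten_replicate _).1 hg
  have heq : g ++ (List.replicate m p).flatten = A1 ++ B1 := by
    apply eq_of_mk_eq hred h3
    rw [← mul_mk, mk_flatten_replicate, hpow, ← mk_flatten_replicate, h1]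
    conv_lhs => rw [h2]
    rw [← mul_mk, ← mul_mk, ← mul_mk, ← inv_mk]
    group
  refine ⟨j * m, ?_⟩
  have hA : A1 <+: (List.replicate (j * m) r).flatten := ⟨X, h1.symm⟩
  refine List.IsPrefix.trans ?_ hA
  have hgP : g ++ p <+: A1 ++ B1 := by
    rw [← heq]
    obtain ⟨m', hm'⟩ := Nat.exists_eq_succ_of_ne_zero hm0
    rw [hm', List.replicate_succ, List.flatten_cons, ← List.append_assoc]
    exact List.prefix_append _ _
  refine List.prefix_of_prefix_length_le hgP (List.prefix_append _ _) ?_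
  have l1 := congrArg List.length heq
  have l2 := congrArg List.length h2
  simp at l1 l2
  have : m ≤ m * p.length := Nat.le_mul_of_pos_right _ hpl
  simp
  omega

theorem conj_cases {α : Type*} {p r g : List (α × Bool)} (hp : IsCyclicallyReduced p)
    (hp0 : p ≠ []) (hr : IsCyclicallyReduced r) (j : ℕ) (hg : FreeGroup.IsReduced g)
    (he : mk g * mk p = mk r ^ j * mk g) :
    ∃ K : ℕ, g ++ p <+: (List.replicate K r).flatten ∨
      g ++ invRev p <+: (List.replicate K (invRev r)).flatten := by
  by_cases h : FreeGroup.IsReduced (g ++ p)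
  · obtain ⟨K, hK⟩ := prefix_of_conj hp hp0 hr j hg h he
    exact ⟨K, Or.inl hK⟩
  · have h' : FreeGroup.IsReduced (g ++ invRev p) := by
      rw [FreeGroup.IsReduced, List.isChain_append] at h ⊢
      refine ⟨hg, isReduced_invRev hp.1, ?_⟩
      intro x hx y hy hxy
      have : ∃ x' ∈ g.getLast?, ∃ z ∈ p.head?, x'.1 = z.1 ∧ x'.2 ≠ z.2 := by
        by_contra hcon
        push Not at hcon
        exact h ⟨hg, hp.1, hcon⟩
      obtain ⟨x', hx', z, hz, hxz, hxz2⟩ := this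
      have hxx : x' = x := by
        simp only [Option.mem_def] at hx hx'
        rw [hx] at hx'
        exact (Option.some.inj hx').symm
      subst hxx
      simp only [invRev, List.head?_reverse, List.getLast?_map, Option.mem_def,
        Option.map_eq_some_iff] at hy
      obtain ⟨y', hy', rfl⟩ := hy
      have := hp.2 y' hy' z hz (by simp at hxy; rw [← hxy, hxz])
      simp only
      rw [this]
      revert hxz2
      cases x'.2 <;> cases z.2 <;> simp
    obtain ⟨K, hK⟩ := prefix_of_conj (isCyc_invRev hp) (by
      intro h0
      apply hp0
      simpa using congrArg invRev h0) (isCyc_invRev hr) j hg h' (by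
      rw [← inv_mk, ← inv_mk, inv_pow]
      have : mk g * mk p * (mk g)⁻¹ = mk r ^ j := by rw [he]; group
      rw [← this]; group)
    exact ⟨K, Or.inr hK⟩

theorem exists_cyc {α : Type*} (x : FreeGroup α) (hx : x ≠ 1) [DecidableEq α] :
    ∃ (y : FreeGroup α) (w : List (α × Bool)), IsCyclicallyReduced w ∧ w ≠ [] ∧
      w.length ≤ x.toWord.length ∧ x = y * mk w * y⁻¹ := by
  have hd := reduceCyclically.conj_conjugator_reduceCyclically x.toWord
  have hx' : x = mk (reduceCyclically.conjugator x.toWord) *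
      mk (reduceCyclically x.toWord) * (mk (reduceCyclically.conjugator x.toWord))⁻¹ := by
    rw [inv_mk, mul_mk, mul_mk, hd, mk_toWord]
  refine ⟨_, _, reduceCyclically.isCyclicallyReduced isReduced_toWord, ?_, ?_, hx'⟩
  · intro h0
    rw [h0] at hx'
    apply hx
    rw [hx', ← one_eq_mk]
    group
  · have := congrArg List.length hd
    simp at this
    omega

/-! ### The code -/

/-- The code word attached to a letter: `t^N t' t^N`. -/
def code {n : ℕ} (e : Fin 2 → Fin n) (N : ℕ) (t : Fin 2 × Bool) : List (Fin n × Bool) :=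
  List.replicate N (e t.1, t.2) ++ (e (1 - t.1), t.2) :: List.replicate N (e t.1, t.2)

variable {n : ℕ} {e : Fin 2 → Fin n} {N : ℕ}

theorem code_length (t : Fin 2 × Bool) : (code e N t).length = 2 * N + 1 := by
  simp [code]; omega

theorem code_get (t : Fin 2 × Bool) (k : ℕ) (hk : k < 2 * N + 1) :
    (code e N t)[k]? = some (if k = N then (e (1 - t.1), t.2) else (e t.1, t.2)) := by
  unfold code
  rw [List.getElem?_append]
  simp only [List.length_replicate]
  split_ifs with h1 h2 h2
  · omega
  · simp [h1]
  · simp [h2]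
  · obtain ⟨m, hm⟩ : ∃ m, k - N = m + 1 := ⟨k - N - 1, by omega⟩
    rw [hm, List.getElem?_cons_succ, List.getElem?_replicate]
    rw [if_pos (by omega)]

theorem flip_ne (he : Function.Injective e) (i : Fin 2) : e (1 - i) ≠ e i := by
  intro h
  have h2 := he h
  clear h
  revert i
  decide

theorem code_invRev (t : Fin 2 × Bool) : invRev (code e N t) = code e N (t.1, !t.2) := by
  simp [code, invRev]

theorem flatMap_invRev (s : List (Fin 2 × Bool)) :
    invRev (s.flatMap (code e N)) = (invRev s).flatMap (code e N) := by
  induction s with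
  | nil => simp
  | cons t s ih =>
    rw [List.flatMap_cons, invRev_append, ih, code_invRev, invRev_cons (a := t),
      List.flatMap_append]
    simp [invRev]

theorem code_reduced (t : Fin 2 × Bool) : FreeGroup.IsReduced (code e N t) := by
  rw [FreeGroup.IsReduced, List.isChain_iff_getElem]
  intro i hi _
  have key : ∀ x ∈ code e N t, x.2 = t.2 := by
    intro x hx
    simp only [code, List.mem_append, List.mem_cons, List.mem_replicate] at hx
    rcases hx with hx | hx | hx
    · rw [hx.2]
    · rw [hx]
    · rw [hx.2]
  rw [key _ (List.getElem_mem _), key _ (List.getElem_mem _)]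

theorem code_head (hN : 0 < N) (t : Fin 2 × Bool) :
    (code e N t).head? = some (e t.1, t.2) := by
  rw [List.head?_eq_getElem?, code_get _ _ (by omega), if_neg (by omega)]

theorem code_last (hN : 0 < N) (t : Fin 2 × Bool) :
    (code e N t).getLast? = some (e t.1, t.2) := by
  rw [List.getLast?_eq_getElem?, code_length, code_get _ _ (by omega), if_neg (by omega)]

theorem flatMap_head (hN : 0 < N) (s : List (Fin 2 × Bool)) :
    (s.flatMap (code e N)).head? = s.head?.map (fun t => (e t.1, t.2)) := by
  cases s with
  | nil => simp
  | cons t s => rw [List.flatMap_cons, List.head?_append, code_head hN]; simp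

theorem flatMap_last (hN : 0 < N) (s : List (Fin 2 × Bool)) :
    (s.flatMap (code e N)).getLast? = s.getLast?.map (fun t => (e t.1, t.2)) := by
  rcases List.eq_nil_or_concat s with rfl | ⟨s, t, rfl⟩
  · simp
  · simp [List.flatMap_append, List.getLast?_append, code_last hN]

theorem flatMap_reduced (he : Function.Injective e) (hN : 0 < N) (s : List (Fin 2 × Bool))
    (hs : FreeGroup.IsReduced s) : FreeGroup.IsReduced (s.flatMap (code e N)) := by
  induction s with
  | nil => simp
  | cons t s ih =>
    rw [List.flatMap_cons, FreeGroup.IsReduced, List.isChain_append]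
    rw [FreeGroup.IsReduced, List.isChain_cons] at hs
    refine ⟨code_reduced t, ih hs.2, ?_⟩
    intro x hx y hy hxy
    rw [code_last hN] at hx
    rw [flatMap_head hN] at hy
    simp only [Option.mem_def, Option.map_eq_some_iff, Option.some.injEq] at hx hy
    obtain ⟨y', hy', rfl⟩ := hy
    subst hx
    exact hs.1 y' hy' (he hxy)

theorem flatMap_cyc (he : Function.Injective e) (hN : 0 < N) (s : List (Fin 2 × Bool))
    (hs : IsCyclicallyReduced s) : IsCyclicallyReduced (s.flatMap (code e N)) := by
  refine ⟨flatMap_reduced he hN s hs.1, ?_⟩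
  intro x hx y hy hxy
  rw [flatMap_last hN] at hx
  rw [flatMap_head hN] at hy
  simp only [Option.mem_def, Option.map_eq_some_iff] at hx hy
  obtain ⟨y', hy', rfl⟩ := hy
  obtain ⟨x', hx', rfl⟩ := hx
  exact hs.2 x' hx' y' hy' (he hxy)

theorem flatMap_replicate (s : List (Fin 2 × Bool)) (K : ℕ) :
    (List.replicate K (s.flatMap (code e N))).flatten =
      ((List.replicate K s).flatten).flatMap (code e N) := by
  induction K with
  | zero => simp
  | succ K ih => rw [List.replicate_succ, List.flatten_cons, ih, List.replicate_succ,
      List.flatten_cons, List.flatMap_append]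

/-- Synchronization: an occurrence of a code word is aligned. -/
theorem sync (he : Function.Injective e) (hN : 2 ≤ N) (t : Fin 2 × Bool)
    (s : List (Fin 2 × Bool)) : ∀ P : List (Fin n × Bool),
    P ++ code e N t <+: s.flatMap (code e N) → ∃ s1 : List (Fin 2 × Bool), P = s1.flatMap (code e N) := by
  induction s with
  | nil =>
    intro P hP
    have := hP.length_le
    simp [code_length] at this
  | cons t0 s ih =>
    intro P hP
    by_cases hlen : 2 * N + 1 ≤ P.length
    · rw [List.flatMap_cons] at hP
      have h1 : code e N t0 <+: P := by
        refine List.prefix_of_prefix_length_le (List.prefix_append _ _)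
          ((List.prefix_append _ _).trans hP) ?_
        rw [code_length]; exact hlen
      obtain ⟨P', rfl⟩ := h1
      rw [List.append_assoc, List.prefix_append_right_inj] at hP
      obtain ⟨s1, rfl⟩ := ih P' hP
      exact ⟨t0 :: s1, by simp⟩
    · by_cases hP0 : P = []
      · exact ⟨[], by simp [hP0]⟩
      exfalso
      have hd : 0 < P.length := List.length_pos_iff.2 hP0
      cases s with
      | nil =>
        have := hP.length_le
        rw [List.length_append, List.flatMap_cons, List.length_append, code_length,
          code_length] at this
        simp only [List.flatMap_nil, List.length_nil] at this
        omega
      | cons t1 s =>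
        obtain ⟨Q, hQ⟩ := hP
        set d := P.length with hdd
        have key : ∀ k, k < 2 * N + 1 →
            (code e N t0 ++ (code e N t1 ++ s.flatMap (code e N)))[d + k]? =
              some (if k = N then (e (1 - t.1), t.2) else (e t.1, t.2)) := by
          intro k hk
          rw [← code_get (e := e) t k hk]
          have : code e N t0 ++ (code e N t1 ++ s.flatMap (code e N)) =
            P ++ code e N t ++ Q := by rw [hQ]; simp
          rw [this, List.append_assoc, List.getElem?_append_right (by omega)]
          rw [← hdd, Nat.add_sub_cancel_left, List.getElem?_append_left]
          rw [code_length]; exact hk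
        have k0 : ∀ k, k < 2 * N + 1 → d + k < 2 * N + 1 →
            (if d + k = N then e (1 - t0.1) else e t0.1) =
              (if k = N then e (1 - t.1) else e t.1) := by
          intro k hk hk2
          have := key k hk
          rw [List.getElem?_append_left (by rw [code_length]; exact hk2),
            code_get _ _ hk2] at this
          have := congrArg Prod.fst (Option.some.inj this)
          split_ifs at this ⊢ <;> exact this
        have k1 : ∀ k, k < 2 * N + 1 → 2 * N + 1 ≤ d + k →
            (if d + k - (2 * N + 1) = N then e (1 - t1.1) else e t1.1) =
              (if k = N then e (1 - t.1) else e t.1) := by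
          intro k hk hk2
          have := key k hk
          rw [List.getElem?_append_right (by rw [code_length]; exact hk2),
            code_length, List.getElem?_append_left (by rw [code_length]; omega),
            code_get _ _ (by omega)] at this
          have := congrArg Prod.fst (Option.some.inj this)
          split_ifs at this ⊢ <;> exact this
        have f0 := flip_ne he t0.1
        have f1 := flip_ne he t1.1
        have f := flip_ne he t.1
        by_cases hdN : d ≤ N
        · have a := k0 (N - d) (by omega) (by omega)
          rw [if_pos (by omega), if_neg (by omega)] at a
          by_cases hd1 : d = 1
          · have b := k0 0 (by omega) (by omega)
            rw [if_neg (by omega), if_neg (by omega)] at b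
            exact f0 (a.trans b.symm)
          · have b := k0 (N - d + 1) (by omega) (by omega)
            rw [if_neg (by omega), if_neg (by omega)] at b
            exact f0 (a.trans b.symm)
        · have a := k1 N (by omega) (by omega)
          rw [if_neg (by omega), if_pos rfl] at a
          by_cases hd1 : d = N + 1
          · have b := k1 (N + 1) (by omega) (by omega)
            rw [if_neg (by omega), if_neg (by omega)] at b
            exact f (a.symm.trans b)
          · have b := k1 (2 * N) (by omega) (by omega)
            rw [if_neg (by omega), if_neg (by omega)] at b
            exact f (a.symm.trans b)

/-- Code words do not occur in powers of short words. -/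
theorem not_in_power (he : Function.Injective e) (t : Fin 2 × Bool)
    (r : List (Fin n × Bool)) (hr0 : r ≠ []) (hr : r.length ≤ N) (K : ℕ)
    (P : List (Fin n × Bool)) : ¬ (P ++ code e N t <+: (List.replicate K r).flatten) := by
  intro hP
  set w := (List.replicate K r).flatten with hw
  have hl : 0 < r.length := List.length_pos_iff.2 hr0
  have hper : w ++ r = r ++ w := by
    have : (List.replicate (K + 1) r).flatten = r ++ w := by
      rw [List.replicate_succ, List.flatten_cons]
    rw [← this, List.replicate_succ', List.flatten_concat]
  have hget : ∀ i, i + r.length < w.length → w[i + r.length]? = w[i]? := by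
    intro i hi
    have h1 : (w ++ r)[i + r.length]? = w[i + r.length]? := List.getElem?_append_left hi
    rw [← h1, hper, List.getElem?_append_right (by omega), Nat.add_sub_cancel]
  obtain ⟨Q, hQ⟩ := hP
  have hwl : P.length + (2 * N + 1) ≤ w.length := by
    rw [← hQ]; simp [code_length]
  have key : ∀ k, k < 2 * N + 1 → w[P.length + k]? =
      some (if k = N then (e (1 - t.1), t.2) else (e t.1, t.2)) := by
    intro k hk
    rw [← code_get (e := e) t k hk, ← hQ, List.append_assoc,
      List.getElem?_append_right (by omega), Nat.add_sub_cancel_left,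
      List.getElem?_append_left (by rw [code_length]; exact hk)]
  have a := key N (by omega)
  have b := key (N - r.length) (by omega)
  have c := hget (P.length + (N - r.length)) (by omega)
  rw [show P.length + (N - r.length) + r.length = P.length + N by omega, a, b,
    if_pos rfl, if_neg (by omega)] at c
  exact flip_ne he t.1 (congrArg Prod.fst (Option.some.inj c))

/-- The homomorphism given by the code. -/
def hom (e : Fin 2 → Fin n) (N : ℕ) : FreeGroup (Fin 2) →* FreeGroup (Fin n) :=
  FreeGroup.lift (fun i => mk (code e N (i, true)))

theorem hom_mk (s : List (Fin 2 × Bool)) : hom e N (mk s) = mk (s.flatMap (code e N)) := by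
  induction s with
  | nil => exact _root_.map_one _
  | cons t s ih =>
    have : (mk (t :: s) : FreeGroup (Fin 2)) = mk [t] * mk s := by rw [mul_mk]; rfl
    rw [this, _root_.map_mul, ih, List.flatMap_cons, ← mul_mk]
    congr 1
    obtain ⟨i, b⟩ := t
    cases b
    · simp [hom, inv_mk, code_invRev]
    · simp [hom]

theorem flatMap_ne_nil {s : List (Fin 2 × Bool)} (hs : s ≠ []) :
    s.flatMap (code e N) ≠ [] := by
  cases s with
  | nil => exact absurd rfl hs
  | cons t s => simp [code]

theorem hom_injective (he : Function.Injective e) (hN : 0 < N) :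
    Function.Injective (hom e N) := by
  rw [injective_iff_map_eq_one]
  intro x hx
  by_contra hx1
  rw [← mk_toWord (x := x), hom_mk, one_eq_mk] at hx
  have := eq_of_mk_eq (flatMap_reduced he hN _ isReduced_toWord) (by simp) hx
  refine flatMap_ne_nil ?_ this
  rwa [Ne, toWord_eq_nil_iff]

/-- Any prefix preceding an image word in an image word is in the range. -/
theorem prefix_mem (he : Function.Injective e) (hN : 2 ≤ N) {s s' : List (Fin 2 × Bool)}
    (hs : s ≠ []) {g : List (Fin n × Bool)}
    (h : g ++ s.flatMap (code e N) <+: s'.flatMap (code e N)) : mk g ∈ (hom e N).range := by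
  cases s with
  | nil => exact absurd rfl hs
  | cons t s =>
    rw [List.flatMap_cons, ← List.append_assoc] at h
    obtain ⟨s1, rfl⟩ := sync he hN t s' g ((List.prefix_append _ _).trans h)
    exact ⟨mk s1, hom_mk s1⟩

theorem invRev_ne_nil {α : Type*} {w : List (α × Bool)} (h : w ≠ []) : invRev w ≠ [] := by
  intro h0
  apply h
  simpa using congrArg invRev h0

theorem range_malnormal (he : Function.Injective e) (hN : 2 ≤ N) :
    IsMalnormal (hom e N).range := by
  intro g hg
  obtain ⟨⟨x, hx⟩, hx0⟩ := Subgroup.ne_bot_iff_exists_ne_one.1 hg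
  have hx1 : x ≠ 1 := fun h => hx0 (Subtype.ext h)
  obtain ⟨h1, ⟨b, hb⟩⟩ := hx
  obtain ⟨_, ⟨a, rfl⟩, ha⟩ := h1
  have hab : g * hom e N a * g⁻¹ = hom e N b := by
    rw [hb, ← ha]; simp
  have ha1 : a ≠ 1 := by
    rintro rfl
    apply hx1
    rw [← ha]; simp
  have hb1 : b ≠ 1 := by
    rintro rfl
    apply hx1
    rw [← hb]; simp
  obtain ⟨y, s, hs, hs0, -, rfl⟩ := exists_cyc a ha1
  obtain ⟨y', s', hs', hs0', -, rfl⟩ := exists_cyc b hb1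
  set g' := (hom e N y')⁻¹ * g * hom e N y with hg'
  suffices hmem : g' ∈ (hom e N).range by
    have : g = hom e N y' * g' * (hom e N y)⁻¹ := by rw [hg']; group
    rw [this]
    exact mul_mem (mul_mem ⟨_, rfl⟩ hmem) (inv_mem ⟨_, rfl⟩)
  have hconj : g' * mk (s.flatMap (code e N)) = mk (s'.flatMap (code e N)) ^ 1 * g' := by
    rw [_root_.map_mul, _root_.map_mul, _root_.map_inv, _root_.map_mul, _root_.map_mul, _root_.map_inv, hom_mk, hom_mk] at hab
    rw [pow_one, hg']
    have h2 : mk (s'.flatMap (code e N)) = (hom e N y')⁻¹ *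
      (hom e N y' * mk (s'.flatMap (code e N)) * (hom e N y')⁻¹) * hom e N y' := by group
    rw [h2, ← hab]
    group
  rw [← mk_toWord (x := g')] at hconj ⊢
  obtain ⟨K, hK | hK⟩ := conj_cases (flatMap_cyc he (by omega) s hs) (flatMap_ne_nil hs0)
    (flatMap_cyc he (by omega) s' hs') 1 isReduced_toWord hconj
  · rw [flatMap_replicate] at hK
    exact prefix_mem he hN hs0 hK
  · rw [flatMap_invRev, flatMap_invRev, flatMap_replicate] at hK
    exact prefix_mem he hN (invRev_ne_nil hs0) hK

theorem range_avoid (he : Function.Injective e) (hN : 2 ≤ N) (h : FreeGroup (Fin n))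
    (hh : h ≠ 1) (hlen : h.toWord.length ≤ N) (g : FreeGroup (Fin n)) :
    conjSubgroup g (hom e N).range ⊓ Subgroup.zpowers h = ⊥ := by
  rw [Subgroup.eq_bot_iff_forall]
  rintro x ⟨⟨_, ⟨a, rfl⟩, ha⟩, ⟨j, hj⟩⟩
  by_contra hx1
  have hab : g * hom e N a * g⁻¹ = h ^ j := by
    refine Eq.trans ?_ (ha.trans hj.symm)
    simp
  have ha1 : a ≠ 1 := by
    rintro rfl
    apply hx1
    rw [← ha]; simp
  obtain ⟨y, s, hs, hs0, -, rfl⟩ := exists_cyc a ha1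
  obtain ⟨z, r0, hr0, hr00, hr0l, hz⟩ := exists_cyc h hh
  obtain ⟨r, m, hr, hrn, hrl, hrj⟩ : ∃ (r : List (Fin n × Bool)) (m : ℕ),
      IsCyclicallyReduced r ∧ r ≠ [] ∧ r.length ≤ N ∧ mk r0 ^ j = mk r ^ m := by
    obtain ⟨m, rfl | rfl⟩ := j.eq_nat_or_neg
    · exact ⟨r0, m, hr0, hr00, by omega, by simp⟩
    · exact ⟨invRev r0, m, isCyc_invRev hr0, invRev_ne_nil hr00,
        by rw [invRev_length]; omega, by rw [← inv_mk, zpow_neg, zpow_natCast, inv_pow]⟩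
  set g' := z⁻¹ * g * hom e N y with hg'
  have hconj : g' * mk (s.flatMap (code e N)) = mk r ^ m * g' := by
    rw [_root_.map_mul, _root_.map_mul, _root_.map_inv, hom_mk, hz, conj_zpow, hrj] at hab
    have h2 : mk r ^ m = z⁻¹ * (z * mk r ^ m * z⁻¹) * z := by group
    rw [h2, ← hab, hg']
    group
  rw [← mk_toWord (x := g')] at hconj
  have fin : ∀ (s : List (Fin 2 × Bool)) (r : List (Fin n × Bool)) (K : ℕ), s ≠ [] → r ≠ [] →
      r.length ≤ N → ¬ (g'.toWord ++ s.flatMap (code e N) <+: (List.replicate K r).flatten) := by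
    intro s r K hs hr hrl hK
    cases s with
    | nil => exact hs rfl
    | cons t s =>
      rw [List.flatMap_cons, ← List.append_assoc] at hK
      exact not_in_power he t r hr hrl K _ ((List.prefix_append _ _).trans hK)
  obtain ⟨K, hK | hK⟩ := conj_cases (flatMap_cyc he (by omega) s hs) (flatMap_ne_nil hs0)
    hr m isReduced_toWord hconj
  · exact fin _ _ _ hs0 hrn hrl hK
  · rw [flatMap_invRev] at hK
    exact fin _ _ _ (invRev_ne_nil hs0) (invRev_ne_nil hrn) (by rw [invRev_length]; exact hrl) hK

end SepCyc

/-- Claim 3.10: given finitely many nontrivial elements `h i` of a free group `F` of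
rank `n ≥ 2`, there is a rank-2 free subgroup `J ≤ F` that is malnormal and such that
every conjugate of `J` meets each cyclic subgroup `⟨h i⟩` trivially. -/
theorem claim_separating_cyclics (n k : ℕ) (hn : 2 ≤ n)
    (h : Fin k → FreeGroup (Fin n)) (hh : ∀ i, h i ≠ 1) :
    ∃ J : Subgroup (FreeGroup (Fin n)),
      (∃ ψ : FreeGroup (Fin 2) →* FreeGroup (Fin n),
        Function.Injective ψ ∧ ψ.range = J) ∧
      IsMalnormal J ∧
      ∀ (i : Fin k) (g : FreeGroup (Fin n)),
        conjSubgroup g J ⊓ Subgroup.zpowers (h i) = ⊥ := by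
  have he : Function.Injective (Fin.castLE hn) := Fin.castLE_injective hn
  set N := 2 + ∑ i, (h i).toWord.length with hN
  refine ⟨(SepCyc.hom (Fin.castLE hn) N).range,
    ⟨_, SepCyc.hom_injective he (by omega), rfl⟩,
    SepCyc.range_malnormal he (by omega), ?_⟩
  intro i g
  refine SepCyc.range_avoid he (by omega) (h i) (hh i) ?_ g
  have := Finset.single_le_sum (f := fun i => (h i).toWord.length)
    (fun _ _ => Nat.zero_le _) (Finset.mem_univ i)
  omega
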